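/- (No-local-broadcasting theorem) Let ρ_{AB} be a density matrix on H_A ⊗ H_B (finite-dimensional). There exist quantum channels Λ: A → A₁A₂ and Γ: B → B₁B₂ such that ρ̃ = (Λ ⊗ Γ)[ρ_{AB}] satisfies ρ̃_{A1B1} = ρ_{AB} and ρ̃_{A2B2} = ρ_{AB} (where ρ̃_{A1B1}, ρ̃_{A2B2} are the reduced states on the indicated pairs of subsystems) if and only if ρ_{AB} is classical-classical, i.e., ρ_{AB} = Σ_{ij} p_{ij} |a_i⟩⟨a_i| ⊗ |b_j⟩⟨b_j| for some probability distribution {p_{ij}} and orthonormal bases {|a_i⟩} of H_A and {|b_j⟩} of H_B. -/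

import Mathlib

open Matrix Kronecker ComplexOrder

section Defs
variable {α α' β β' γ : Type*} [Fintype α] [DecidableEq α] [Fintype α'] [DecidableEq α']
  [Fintype β] [DecidableEq β] [Fintype β'] [DecidableEq β'] [Fintype γ] [DecidableEq γ]

/-- A density matrix: a positive semidefinite matrix with unit trace. -/
def IsDensityMatrix (ρ : Matrix β β ℂ) : Prop := ρ.PosSemidef ∧ ρ.trace = 1

/-- The map `id_α ⊗ Λ` induced on matrices over the product index type. -/
noncomputable def idTensor (Λ : Matrix β β ℂ →ₗ[ℂ] Matrix β' β' ℂ) :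
    Matrix (α × β) (α × β) ℂ →ₗ[ℂ] Matrix (α × β') (α × β') ℂ where
  toFun M := Matrix.of fun p q => Λ (Matrix.of fun b b' => M (p.1, b) (q.1, b')) p.2 q.2
  map_add' M N := by
    ext p q
    show Λ (Matrix.of fun b b' => (M + N) (p.1, b) (q.1, b')) p.2 q.2 = _
    have h : (Matrix.of fun b b' => (M + N) (p.1, b) (q.1, b')) =
        (Matrix.of fun b b' => M (p.1, b) (q.1, b')) +
          (Matrix.of fun b b' => N (p.1, b) (q.1, b')) := rfl
    rw [h, map_add]
    rfl
  map_smul' c M := by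
    ext p q
    show Λ (Matrix.of fun b b' => (c • M) (p.1, b) (q.1, b')) p.2 q.2 = _
    have h : (Matrix.of fun b b' => (c • M) (p.1, b) (q.1, b')) =
        c • (Matrix.of fun b b' => M (p.1, b) (q.1, b')) := rfl
    rw [h, _root_.map_smul]
    rfl

/-- The map `Λ ⊗ id_β` induced on matrices over the product index type. -/
noncomputable def tensorId (Λ : Matrix α α ℂ →ₗ[ℂ] Matrix α' α' ℂ) :
    Matrix (α × β) (α × β) ℂ →ₗ[ℂ] Matrix (α' × β) (α' × β) ℂ where
  toFun M := Matrix.of fun p q => Λ (Matrix.of fun a a' => M (a, p.2) (a', q.2)) p.1 q.1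
  map_add' M N := by
    ext p q
    show Λ (Matrix.of fun a a' => (M + N) (a, p.2) (a', q.2)) p.1 q.1 = _
    have h : (Matrix.of fun a a' => (M + N) (a, p.2) (a', q.2)) =
        (Matrix.of fun a a' => M (a, p.2) (a', q.2)) +
          (Matrix.of fun a a' => N (a, p.2) (a', q.2)) := rfl
    rw [h, map_add]
    rfl
  map_smul' c M := by
    ext p q
    show Λ (Matrix.of fun a a' => (c • M) (a, p.2) (a', q.2)) p.1 q.1 = _
    have h : (Matrix.of fun a a' => (c • M) (a, p.2) (a', q.2)) =
        c • (Matrix.of fun a a' => M (a, p.2) (a', q.2)) := rfl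
    rw [h, _root_.map_smul]
    rfl

/-- Complete positivity: all extensions `id ⊗ Λ` preserve positive semidefiniteness. -/
def IsCompletelyPositive (Λ : Matrix β β ℂ →ₗ[ℂ] Matrix β' β' ℂ) : Prop :=
  ∀ (k : ℕ) (M : Matrix (Fin k × β) (Fin k × β) ℂ), M.PosSemidef → (idTensor Λ M).PosSemidef

/-- A quantum channel: a completely positive trace-preserving linear map. -/
def IsQuantumChannel (Λ : Matrix β β ℂ →ₗ[ℂ] Matrix β' β' ℂ) : Prop :=
  IsCompletelyPositive Λ ∧ ∀ X, (Λ X).trace = X.trace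

/-- The reduced state on `A₁B₁` of a state of `(A₁A₂)(B₁B₂)`. -/
noncomputable def marg11 (M : Matrix ((α × α') × β × β') ((α × α') × β × β') ℂ) :
    Matrix (α × β) (α × β) ℂ :=
  Matrix.of fun p q => ∑ a₂, ∑ b₂, M ((p.1, a₂), (p.2, b₂)) ((q.1, a₂), (q.2, b₂))

/-- The reduced state on `A₂B₂` of a state of `(A₁A₂)(B₁B₂)`. -/
noncomputable def marg22 (M : Matrix ((α × α') × β × β') ((α × α') × β × β') ℂ) :
    Matrix (α' × β') (α' × β') ℂ :=
  Matrix.of fun p q => ∑ a₁, ∑ b₁, M ((a₁, p.1), (b₁, p.2)) ((a₁, q.1), (b₁, q.2))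

/-- A bipartite state is classical-classical if it is diagonal in a product of local
orthonormal bases: `ρ = ∑ᵢⱼ pᵢⱼ |aᵢ⟩⟨aᵢ| ⊗ |bⱼ⟩⟨bⱼ|`. -/
def ClassicalClassical (ρ : Matrix (α × β) (α × β) ℂ) : Prop :=
  ∃ (p : α → β → ℝ) (av : α → α → ℂ) (bv : β → β → ℂ),
    (∀ i j, 0 ≤ p i j) ∧ (∑ i, ∑ j, p i j = 1) ∧
    (∀ i i', star (av i) ⬝ᵥ av i' = if i = i' then 1 else 0) ∧
    (∀ j j', star (bv j) ⬝ᵥ bv j' = if j = j' then 1 else 0) ∧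
    ρ = ∑ i, ∑ j, (p i j : ℂ) •
      (vecMulVec (av i) (star (av i)) ⊗ₖ vecMulVec (bv j) (star (bv j)))

end Defs

/-!
The pairs of channels broadcasting `ρ`, recorded by their marginals, form a compact semigroup, which
therefore contains an idempotent: the local channels may be taken with idempotent marginals, each of
which then fixes `ρ` by itself. Suppose both marginals of `Λ : A → A₁A₂` fix a state `σ`, and let
`X`, `Y` be observables fixed by the dual of the first and of the second marginal. Equality in the
Kadison–Schwarz inequality makes `X ⊗ 1` behave, in the state `σ`, as an element of the
multiplicative domain of the dual of `Λ`; as it commutes with `1 ⊗ Y`, this gives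
`tr σXY = tr σYX`. This forces any two states fixed by both idempotent marginals to commute. In
particular the states of `A` conditioned on the effects of `B` commute, so an orthonormal basis
diagonalises them all, and likewise for `B`. Conversely, measuring both systems in the eigenbases of
a classical-classical state and preparing two copies of each outcome broadcasts the state.
-/

section TensorMaps

variable {α α' α'' β β' β'' : Type*}

theorem tensorId_kronecker (P : Matrix α α ℂ →ₗ[ℂ] Matrix α' α' ℂ) (X : Matrix α α ℂ)
    (Y : Matrix β β ℂ) : tensorId P (X ⊗ₖ Y) = P X ⊗ₖ Y := by
  ext p q
  have h : (Matrix.of fun a a' => (X ⊗ₖ Y) (a, p.2) (a', q.2)) = Y p.2 q.2 • X := by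
    ext a a'
    exact mul_comm _ _
  change P (Matrix.of fun a a' => (X ⊗ₖ Y) (a, p.2) (a', q.2)) p.1 q.1 = P X p.1 q.1 * Y p.2 q.2
  rw [h, map_smul, Matrix.smul_apply, smul_eq_mul, mul_comm]

theorem idTensor_kronecker (Q : Matrix β β ℂ →ₗ[ℂ] Matrix β' β' ℂ) (X : Matrix α α ℂ)
    (Y : Matrix β β ℂ) : idTensor Q (X ⊗ₖ Y) = X ⊗ₖ Q Y := by
  ext p q
  change Q (X p.1 q.1 • Y) p.2 q.2 = X p.1 q.1 * Q Y p.2 q.2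
  rw [map_smul, Matrix.smul_apply, smul_eq_mul]

theorem linearMap_ext_kronecker {M : Type*} [AddCommMonoid M] [Module ℂ M] [Finite α] [Finite β]
    {f g : Matrix (α × β) (α × β) ℂ →ₗ[ℂ] M} (h : ∀ X Y, f (X ⊗ₖ Y) = g (X ⊗ₖ Y)) : f = g := by
  classical
  cases nonempty_fintype α
  cases nonempty_fintype β
  refine Matrix.ext_linearMap ℂ fun p q => LinearMap.ext_ring ?_
  simpa [Matrix.single_kronecker_single] using
    h (Matrix.single p.1 q.1 1) (Matrix.single p.2 q.2 1)

/-- The tensor product `P ⊗ Q` of two maps of matrix algebras. -/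
noncomputable def tensorMap (P : Matrix α α ℂ →ₗ[ℂ] Matrix α' α' ℂ)
    (Q : Matrix β β ℂ →ₗ[ℂ] Matrix β' β' ℂ) :
    Matrix (α × β) (α × β) ℂ →ₗ[ℂ] Matrix (α' × β') (α' × β') ℂ :=
  idTensor Q ∘ₗ tensorId P

theorem tensorMap_apply (P : Matrix α α ℂ →ₗ[ℂ] Matrix α' α' ℂ)
    (Q : Matrix β β ℂ →ₗ[ℂ] Matrix β' β' ℂ) (M : Matrix (α × β) (α × β) ℂ) :
    tensorMap P Q M = idTensor Q (tensorId P M) :=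
  rfl

@[simp]
theorem tensorMap_kronecker (P : Matrix α α ℂ →ₗ[ℂ] Matrix α' α' ℂ)
    (Q : Matrix β β ℂ →ₗ[ℂ] Matrix β' β' ℂ) (X : Matrix α α ℂ) (Y : Matrix β β ℂ) :
    tensorMap P Q (X ⊗ₖ Y) = P X ⊗ₖ Q Y := by
  rw [tensorMap_apply, tensorId_kronecker, idTensor_kronecker]

theorem tensorMap_id_right (P : Matrix α α ℂ →ₗ[ℂ] Matrix α' α' ℂ) :
    tensorMap P (LinearMap.id : Matrix β β ℂ →ₗ[ℂ] _) = tensorId P :=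
  rfl

theorem tensorMap_id_left (Q : Matrix β β ℂ →ₗ[ℂ] Matrix β' β' ℂ) :
    tensorMap (LinearMap.id : Matrix α α ℂ →ₗ[ℂ] _) Q = idTensor Q :=
  rfl

theorem tensorMap_comp [Finite α] [Finite β] (P' : Matrix α' α' ℂ →ₗ[ℂ] Matrix α'' α'' ℂ)
    (P : Matrix α α ℂ →ₗ[ℂ] Matrix α' α' ℂ) (Q' : Matrix β' β' ℂ →ₗ[ℂ] Matrix β'' β'' ℂ)
    (Q : Matrix β β ℂ →ₗ[ℂ] Matrix β' β' ℂ) :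
    tensorMap (P' ∘ₗ P) (Q' ∘ₗ Q) = tensorMap P' Q' ∘ₗ tensorMap P Q :=
  linearMap_ext_kronecker fun X Y => by simp

end TensorMaps

section PartialTrace

variable {α α' β β' : Type*}

/-- The partial trace `tr_B` over the right tensor factor. -/
def partialTraceRight [Fintype β] : Matrix (α × β) (α × β) ℂ →ₗ[ℂ] Matrix α α ℂ where
  toFun M := Matrix.of fun a a' => ∑ b, M (a, b) (a', b)
  map_add' M N := by ext; exact Finset.sum_add_distrib
  map_smul' c M := by ext; exact (Finset.mul_sum _ _ _).symm

/-- The partial trace `tr_A` over the left tensor factor. -/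
def partialTraceLeft [Fintype α] : Matrix (α × β) (α × β) ℂ →ₗ[ℂ] Matrix β β ℂ where
  toFun M := Matrix.of fun b b' => ∑ a, M (a, b) (a, b')
  map_add' M N := by ext; exact Finset.sum_add_distrib
  map_smul' c M := by ext; exact (Finset.mul_sum _ _ _).symm

@[simp]
theorem partialTraceRight_kronecker [Fintype β] (X : Matrix α α ℂ) (Y : Matrix β β ℂ) :
    partialTraceRight (X ⊗ₖ Y) = Y.trace • X := by
  ext a a'
  simp [partialTraceRight, trace, ← Finset.mul_sum, mul_comm]

@[simp]
theorem partialTraceLeft_kronecker [Fintype α] (X : Matrix α α ℂ) (Y : Matrix β β ℂ) :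
    partialTraceLeft (X ⊗ₖ Y) = X.trace • Y := by
  ext b b'
  simp [partialTraceLeft, trace, Finset.sum_mul]

theorem trace_partialTraceRight_mul [Fintype α] [Fintype β] [DecidableEq β]
    (N : Matrix (α × β) (α × β) ℂ) (X : Matrix α α ℂ) :
    (partialTraceRight N * X).trace = (N * (X ⊗ₖ (1 : Matrix β β ℂ))).trace := by
  refine LinearMap.congr_fun (f := traceLinearMap α ℂ ℂ ∘ₗ LinearMap.mulRight ℂ X ∘ₗ
    partialTraceRight) (g := traceLinearMap _ ℂ ℂ ∘ₗ LinearMap.mulRight ℂ (X ⊗ₖ 1))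
    (linearMap_ext_kronecker fun A B => ?_) N
  simp [← mul_kronecker_mul, trace_kronecker, mul_comm]

theorem trace_partialTraceLeft_mul [Fintype α] [Fintype β] [DecidableEq α]
    (N : Matrix (α × β) (α × β) ℂ) (Y : Matrix β β ℂ) :
    (partialTraceLeft N * Y).trace = (N * ((1 : Matrix α α ℂ) ⊗ₖ Y)).trace := by
  refine LinearMap.congr_fun (f := traceLinearMap β ℂ ℂ ∘ₗ LinearMap.mulRight ℂ Y ∘ₗ
    partialTraceLeft) (g := traceLinearMap _ ℂ ℂ ∘ₗ LinearMap.mulRight ℂ (1 ⊗ₖ Y))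
    (linearMap_ext_kronecker fun A B => ?_) N
  simp [← mul_kronecker_mul, trace_kronecker]

theorem trace_partialTraceRight [Fintype α] [Fintype β] (N : Matrix (α × β) (α × β) ℂ) :
    (partialTraceRight N).trace = N.trace :=
  (Fintype.sum_prod_type (fun p : α × β => N p p)).symm

theorem trace_partialTraceLeft [Fintype α] [Fintype β] (N : Matrix (α × β) (α × β) ℂ) :
    (partialTraceLeft N).trace = N.trace :=
  (Fintype.sum_prod_type_right (fun p : α × β => N p p)).symm

theorem partialTraceRight_comp_tensorMap [Finite α] [Fintype β] [Fintype β']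
    (P : Matrix α α ℂ →ₗ[ℂ] Matrix α' α' ℂ) {Q : Matrix β β ℂ →ₗ[ℂ] Matrix β' β' ℂ}
    (hQ : ∀ Y, (Q Y).trace = Y.trace) :
    partialTraceRight ∘ₗ tensorMap P Q = P ∘ₗ partialTraceRight :=
  linearMap_ext_kronecker fun X Y => by simp [hQ]

theorem partialTraceLeft_comp_tensorMap [Fintype α] [Fintype α'] [Finite β]
    {P : Matrix α α ℂ →ₗ[ℂ] Matrix α' α' ℂ} (hP : ∀ X, (P X).trace = X.trace)
    (Q : Matrix β β ℂ →ₗ[ℂ] Matrix β' β' ℂ) :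
    partialTraceLeft ∘ₗ tensorMap P Q = Q ∘ₗ partialTraceLeft :=
  linearMap_ext_kronecker fun X Y => by simp [hP]

theorem marg11_tensorMap {κ ι : Type*} [Finite κ] [Finite ι] [Fintype α'] [Fintype β']
    (Λ : Matrix κ κ ℂ →ₗ[ℂ] Matrix (α × α') (α × α') ℂ)
    (Γ : Matrix ι ι ℂ →ₗ[ℂ] Matrix (β × β') (β × β') ℂ) (M : Matrix (κ × ι) (κ × ι) ℂ) :
    marg11 (tensorMap Λ Γ M) = tensorMap (partialTraceRight ∘ₗ Λ) (partialTraceRight ∘ₗ Γ) M := by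
  rw [tensorMap_comp]
  ext p q
  exact Finset.sum_comm

theorem marg22_tensorMap {κ ι : Type*} [Finite κ] [Finite ι] [Fintype α] [Fintype β]
    (Λ : Matrix κ κ ℂ →ₗ[ℂ] Matrix (α × α') (α × α') ℂ)
    (Γ : Matrix ι ι ℂ →ₗ[ℂ] Matrix (β × β') (β × β') ℂ) (M : Matrix (κ × ι) (κ × ι) ℂ) :
    marg22 (tensorMap Λ Γ M) = tensorMap (partialTraceLeft ∘ₗ Λ) (partialTraceLeft ∘ₗ Γ) M := by
  rw [tensorMap_comp]
  ext p q
  exact Finset.sum_comm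

end PartialTrace

section Channels

variable {α α' α'' β β' κ : Type*}

theorem IsCompletelyPositive.posSemidef_idTensor {Λ : Matrix α α ℂ →ₗ[ℂ] Matrix α' α' ℂ}
    (hΛ : IsCompletelyPositive Λ) [Finite κ] {M : Matrix (κ × α) (κ × α) ℂ}
    (hM : M.PosSemidef) : (idTensor Λ M).PosSemidef := by
  obtain ⟨k, ⟨e⟩⟩ := Finite.exists_equiv_fin κ
  have h := (hΛ k _ (hM.submatrix (Prod.map e.symm id))).submatrix (Prod.map e id)
  have hsymm (N : Matrix (κ × α) (κ × α) ℂ) : (idTensor Λ (N.submatrix (Prod.map e.symm id)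
      (Prod.map e.symm id))).submatrix (Prod.map e id) (Prod.map e id) = idTensor Λ N := by
    ext p q
    simp [idTensor]
  rwa [hsymm] at h

theorem IsCompletelyPositive.posSemidef_map {Λ : Matrix α α ℂ →ₗ[ℂ] Matrix α' α' ℂ}
    (hΛ : IsCompletelyPositive Λ) {X : Matrix α α ℂ} (hX : X.PosSemidef) : (Λ X).PosSemidef :=
  (hΛ.posSemidef_idTensor (hX.submatrix (Prod.snd : Unit × α → α))).submatrix (Prod.mk ())

theorem IsCompletelyPositive.comp {Λ' : Matrix α' α' ℂ →ₗ[ℂ] Matrix α'' α'' ℂ}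
    {Λ : Matrix α α ℂ →ₗ[ℂ] Matrix α' α' ℂ} (hΛ' : IsCompletelyPositive Λ')
    (hΛ : IsCompletelyPositive Λ) : IsCompletelyPositive (Λ' ∘ₗ Λ) :=
  fun k _ hM => hΛ' k _ (hΛ k _ hM)

theorem IsCompletelyPositive.tensorMap [Finite α'] [Finite β]
    {P : Matrix α α ℂ →ₗ[ℂ] Matrix α' α' ℂ} {Q : Matrix β β ℂ →ₗ[ℂ] Matrix β' β' ℂ}
    (hP : IsCompletelyPositive P) (hQ : IsCompletelyPositive Q) :
    IsCompletelyPositive (tensorMap P Q) := by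
  intro k M hM
  let swapRight (ι : Type _) : (Fin k × β) × ι → Fin k × ι × β := fun x => (x.1.1, x.2, x.1.2)
  have h := hP.posSemidef_idTensor (hM.submatrix (swapRight α))
  have h' := hQ.posSemidef_idTensor
    (h.submatrix (fun x : (Fin k × α') × β => ((x.1.1, x.2), x.1.2)))
  exact h'.submatrix (Equiv.prodAssoc (Fin k) α' β').symm

theorem isCompletelyPositive_partialTraceRight [Fintype β] :
    IsCompletelyPositive (partialTraceRight : Matrix (α × β) (α × β) ℂ →ₗ[ℂ] Matrix α α ℂ) := by
  intro k M hM
  have h : idTensor partialTraceRight M =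
      ∑ b : β, M.submatrix (fun p => (p.1, p.2, b)) (fun p => (p.1, p.2, b)) := by
    ext p q
    simp [idTensor, partialTraceRight, Matrix.sum_apply]
  exact h ▸ posSemidef_sum _ fun b _ => hM.submatrix _

theorem isCompletelyPositive_partialTraceLeft [Fintype α] :
    IsCompletelyPositive (partialTraceLeft : Matrix (α × β) (α × β) ℂ →ₗ[ℂ] Matrix β β ℂ) := by
  intro k M hM
  have h : idTensor partialTraceLeft M =
      ∑ a : α, M.submatrix (fun p => (p.1, a, p.2)) (fun p => (p.1, a, p.2)) := by
    ext p q
    simp [idTensor, partialTraceLeft, Matrix.sum_apply]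
  exact h ▸ posSemidef_sum _ fun a _ => hM.submatrix _

theorem isQuantumChannel_partialTraceRight [Fintype α] [Fintype β] : IsQuantumChannel
    (partialTraceRight : Matrix (α × β) (α × β) ℂ →ₗ[ℂ] Matrix α α ℂ) :=
  ⟨isCompletelyPositive_partialTraceRight, trace_partialTraceRight⟩

theorem isQuantumChannel_partialTraceLeft [Fintype α] [Fintype β] : IsQuantumChannel
    (partialTraceLeft : Matrix (α × β) (α × β) ℂ →ₗ[ℂ] Matrix β β ℂ) :=
  ⟨isCompletelyPositive_partialTraceLeft, trace_partialTraceLeft⟩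

theorem IsQuantumChannel.comp [Fintype α] [Fintype α'] [Fintype α'']
    {Λ' : Matrix α' α' ℂ →ₗ[ℂ] Matrix α'' α'' ℂ} {Λ : Matrix α α ℂ →ₗ[ℂ] Matrix α' α' ℂ}
    (hΛ' : IsQuantumChannel Λ') (hΛ : IsQuantumChannel Λ) : IsQuantumChannel (Λ' ∘ₗ Λ) :=
  ⟨hΛ'.1.comp hΛ.1, fun X => (hΛ'.2 _).trans (hΛ.2 X)⟩

theorem IsQuantumChannel.tensorMap [Fintype α] [Fintype α'] [Fintype β] [Fintype β']
    {P : Matrix α α ℂ →ₗ[ℂ] Matrix α' α' ℂ} {Q : Matrix β β ℂ →ₗ[ℂ] Matrix β' β' ℂ}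
    (hP : IsQuantumChannel P) (hQ : IsQuantumChannel Q) : IsQuantumChannel (tensorMap P Q) := by
  refine ⟨hP.1.tensorMap hQ.1, fun M => ?_⟩
  rw [← trace_partialTraceRight, ← LinearMap.comp_apply, partialTraceRight_comp_tensorMap P hQ.2,
    LinearMap.comp_apply, hP.2, trace_partialTraceRight]

end Channels

section TraceForm

variable {α γ : Type*} [Fintype α] [Fintype γ]

theorem exists_eq_conjTranspose_mul_self {σ : Matrix α α ℂ} (hσ : σ.PosSemidef) :
    ∃ B : Matrix α α ℂ, σ = Bᴴ * B := by
  classical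
  open scoped MatrixOrder in
  exact CStarAlgebra.nonneg_iff_eq_star_mul_self.mp hσ.nonneg

theorem trace_mul_nonneg {σ N : Matrix α α ℂ} (hσ : σ.PosSemidef) (hN : N.PosSemidef) :
    0 ≤ (σ * N).trace := by
  obtain ⟨B, rfl⟩ := exists_eq_conjTranspose_mul_self hσ
  rw [Matrix.mul_assoc, trace_mul_comm]
  exact (hN.mul_mul_conjTranspose_same B).trace_nonneg

theorem posSemidef_of_forall_trace_mul_nonneg {M : Matrix α α ℂ}
    (h : ∀ P : Matrix α α ℂ, P.PosSemidef → 0 ≤ (P * M).trace) : M.PosSemidef := by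
  classical
  rw [← isPositive_toEuclideanLin_iff, LinearMap.isPositive_iff_complex]
  intro x
  have hx := h _ (posSemidef_vecMulVec_self_star x.ofLp)
  rw [vecMulVec_mul, trace_vecMulVec, dotProduct_comm, ← dotProduct_mulVec] at hx
  have hinner : inner ℂ (M.toEuclideanLin x) x = star (star x.ofLp ⬝ᵥ M *ᵥ x.ofLp) := by
    rw [EuclideanSpace.inner_eq_star_dotProduct, dotProduct_comm]
    exact star_dotProduct _ _
  rw [hinner, (IsSelfAdjoint.of_nonneg hx).star_eq]
  exact ⟨RCLike.conj_eq_iff_re.mp (IsSelfAdjoint.of_nonneg hx).star_eq, (RCLike.nonneg_iff.mp hx).1⟩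

theorem mul_eq_zero_of_trace_mul_conjTranspose_mul_self {σ : Matrix α α ℂ} (hσ : σ.PosSemidef)
    {A : Matrix γ α ℂ} (hA : (σ * (Aᴴ * A)).trace = 0) : A * σ = 0 := by
  obtain ⟨B, rfl⟩ := exists_eq_conjTranspose_mul_self hσ
  have hAB : A * Bᴴ = 0 := by
    rw [← trace_conjTranspose_mul_self_eq_zero_iff, ← hA, conjTranspose_mul,
      conjTranspose_conjTranspose, Matrix.mul_assoc Bᴴ, trace_mul_comm Bᴴ]
    simp only [Matrix.mul_assoc]
  rw [← Matrix.mul_assoc, hAB, Matrix.zero_mul]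

end TraceForm

section HeisenbergDual

variable {α γ κ : Type*}

/-- The Choi matrix of `Λ`, whose `(i, j)` block is `Λ |i⟩⟨j|`. -/
def choiMatrix [DecidableEq α] (Λ : Matrix α α ℂ →ₗ[ℂ] Matrix γ γ ℂ) :
    Matrix (α × γ) (α × γ) ℂ :=
  Matrix.of fun p q => Λ (Matrix.single p.1 q.1 1) p.2 q.2

theorem IsCompletelyPositive.posSemidef_choiMatrix [Finite α] [DecidableEq α]
    {Λ : Matrix α α ℂ →ₗ[ℂ] Matrix γ γ ℂ} (hΛ : IsCompletelyPositive Λ) :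
    (choiMatrix Λ).PosSemidef := by
  let v : α × α → ℂ := fun p => if p.1 = p.2 then 1 else 0
  have hv : choiMatrix Λ = idTensor Λ (vecMulVec v (star v)) := by
    ext p q
    refine congrArg (Λ · p.2 q.2) (Matrix.ext fun a a' => ?_)
    simp [v, vecMulVec_apply, Matrix.single_apply, ← ite_and, and_comm]
  exact hv ▸ hΛ.posSemidef_idTensor (posSemidef_vecMulVec_self_star v)

theorem IsCompletelyPositive.map_conjTranspose [Finite α]
    {Λ : Matrix α α ℂ →ₗ[ℂ] Matrix γ γ ℂ} (hΛ : IsCompletelyPositive Λ) (X : Matrix α α ℂ) :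
    Λ Xᴴ = (Λ X)ᴴ := by
  classical
  cases nonempty_fintype α
  have hsingle (i j : α) : Λ (Matrix.single i j 1) = (Λ (Matrix.single j i 1))ᴴ := by
    ext a b
    exact (hΛ.posSemidef_choiMatrix.1.apply (i, a) (j, b)).symm
  induction X using Matrix.induction_on' with
  | h_zero => simp
  | h_add X Y hX hY => simp [hX, hY]
  | h_std_basis i j c =>
    have hc : Matrix.single i j c = c • Matrix.single i j 1 := by simp
    rw [hc, conjTranspose_smul, map_smul, map_smul, conjTranspose_smul, conjTranspose_single,
      star_one, hsingle]

/-- The adjoint of `Λ` for the trace pairing `tr (X * B)`, describing the evolution of observables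
(the Heisenberg picture). -/
def heisenbergDual [DecidableEq α] [Fintype γ] (Λ : Matrix α α ℂ →ₗ[ℂ] Matrix γ γ ℂ) :
    Matrix γ γ ℂ →ₗ[ℂ] Matrix α α ℂ where
  toFun B := Matrix.of fun i j => (Λ (Matrix.single j i 1) * B).trace
  map_add' B C := by ext; simp [Matrix.mul_add]
  map_smul' c B := by ext; simp

variable [DecidableEq α] [Fintype γ]

theorem trace_mul_heisenbergDual [Fintype α] (Λ : Matrix α α ℂ →ₗ[ℂ] Matrix γ γ ℂ)
    (X : Matrix α α ℂ) (B : Matrix γ γ ℂ) : (X * heisenbergDual Λ B).trace = (Λ X * B).trace := by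
  refine LinearMap.congr_fun (f := traceLinearMap α ℂ ℂ ∘ₗ LinearMap.mulRight ℂ _)
    (g := traceLinearMap γ ℂ ℂ ∘ₗ LinearMap.mulRight ℂ B ∘ₗ Λ)
    (Matrix.ext_linearMap ℂ fun i j => LinearMap.ext_ring ?_) X
  simp [heisenbergDual, trace_single_mul]

theorem heisenbergDual_comp [Finite α] [DecidableEq γ] [Fintype κ]
    (Λ' : Matrix γ γ ℂ →ₗ[ℂ] Matrix κ κ ℂ) (Λ : Matrix α α ℂ →ₗ[ℂ] Matrix γ γ ℂ) :
    heisenbergDual (Λ' ∘ₗ Λ) = heisenbergDual Λ ∘ₗ heisenbergDual Λ' := by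
  cases nonempty_fintype α
  refine LinearMap.ext fun B => Matrix.ext_iff_trace_mul_left.mpr fun X => ?_
  simp [trace_mul_heisenbergDual]

theorem isIdempotentElem_heisenbergDual [Fintype α] {P : Module.End ℂ (Matrix α α ℂ)}
    (hP : IsIdempotentElem P) : IsIdempotentElem (heisenbergDual P) :=
  (heisenbergDual_comp P P).symm.trans (congrArg heisenbergDual hP.eq)

theorem trace_mul_heisenbergDual_of_fixed [Fintype α] {P : Matrix α α ℂ →ₗ[ℂ] Matrix α α ℂ}
    {σ : Matrix α α ℂ} (hσ : P σ = σ) (X : Matrix α α ℂ) :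
    (σ * heisenbergDual P X).trace = (σ * X).trace := by
  rw [trace_mul_heisenbergDual, hσ]

theorem heisenbergDual_idTensor [Finite α] [Fintype κ] [DecidableEq κ]
    (Λ : Matrix α α ℂ →ₗ[ℂ] Matrix γ γ ℂ) :
    heisenbergDual (idTensor Λ : Matrix (κ × α) (κ × α) ℂ →ₗ[ℂ] _) =
      idTensor (heisenbergDual Λ) := by
  cases nonempty_fintype α
  refine linearMap_ext_kronecker fun A B => (Matrix.ext_iff_trace_mul_left.mpr fun N => ?_)
  rw [trace_mul_heisenbergDual, idTensor_kronecker]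
  refine LinearMap.congr_fun (f := traceLinearMap _ ℂ ℂ ∘ₗ LinearMap.mulRight ℂ _ ∘ₗ idTensor Λ)
    (g := traceLinearMap _ ℂ ℂ ∘ₗ LinearMap.mulRight ℂ _) (linearMap_ext_kronecker fun X Y => ?_) N
  simp [idTensor_kronecker, ← mul_kronecker_mul, trace_kronecker, trace_mul_heisenbergDual]

theorem IsCompletelyPositive.heisenbergDual [Finite α] {Λ : Matrix α α ℂ →ₗ[ℂ] Matrix γ γ ℂ}
    (hΛ : IsCompletelyPositive Λ) : IsCompletelyPositive (heisenbergDual Λ) := by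
  cases nonempty_fintype α
  intro k M hM
  rw [← heisenbergDual_idTensor]
  refine posSemidef_of_forall_trace_mul_nonneg fun P hP => ?_
  rw [trace_mul_heisenbergDual]
  exact trace_mul_nonneg (hΛ k P hP) hM

theorem heisenbergDual_one [Fintype α] [DecidableEq γ] {Λ : Matrix α α ℂ →ₗ[ℂ] Matrix γ γ ℂ}
    (hΛ : ∀ X, (Λ X).trace = X.trace) : heisenbergDual Λ 1 = 1 :=
  Matrix.ext_iff_trace_mul_left.mpr fun X => by
    rw [trace_mul_heisenbergDual, Matrix.mul_one, Matrix.mul_one, hΛ]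

theorem heisenbergDual_partialTraceRight_comp [Finite α] [Fintype κ] [DecidableEq κ]
    (Λ : Matrix α α ℂ →ₗ[ℂ] Matrix (γ × κ) (γ × κ) ℂ) (B : Matrix γ γ ℂ) :
    heisenbergDual (partialTraceRight ∘ₗ Λ) B = heisenbergDual Λ (B ⊗ₖ 1) := by
  cases nonempty_fintype α
  refine Matrix.ext_iff_trace_mul_left.mpr fun X => ?_
  simp [trace_mul_heisenbergDual, trace_partialTraceRight_mul]

theorem heisenbergDual_partialTraceLeft_comp [Finite α] [Fintype κ] [DecidableEq κ]
    (Λ : Matrix α α ℂ →ₗ[ℂ] Matrix (κ × γ) (κ × γ) ℂ) (B : Matrix γ γ ℂ) :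
    heisenbergDual (partialTraceLeft ∘ₗ Λ) B = heisenbergDual Λ (1 ⊗ₖ B) := by
  cases nonempty_fintype α
  refine Matrix.ext_iff_trace_mul_left.mpr fun X => ?_
  simp [trace_mul_heisenbergDual, trace_partialTraceLeft_mul]

end HeisenbergDual

section SchwarzMaps

variable {α γ : Type*} [Fintype α] [Fintype γ]

/-- A Schwarz map: a linear map of matrix algebras that respects adjoints and satisfies the
Kadison–Schwarz inequality `Φ(A)* Φ(A) ≤ Φ(A* A)`. -/
structure IsSchwarzMap (Φ : Matrix γ γ ℂ →ₗ[ℂ] Matrix α α ℂ) : Prop where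
  map_conjTranspose (A : Matrix γ γ ℂ) : Φ Aᴴ = (Φ A)ᴴ
  posSemidef_sub (A : Matrix γ γ ℂ) : (Φ (Aᴴ * A) - (Φ A)ᴴ * Φ A).PosSemidef

theorem IsCompletelyPositive.isSchwarzMap [DecidableEq α] [DecidableEq γ]
    {Φ : Matrix γ γ ℂ →ₗ[ℂ] Matrix α α ℂ} (hΦ : IsCompletelyPositive Φ) (hone : Φ 1 = 1) :
    IsSchwarzMap Φ where
  map_conjTranspose := hΦ.map_conjTranspose
  posSemidef_sub A := by
    -- The block matrix `[Φ(A* A), Φ(A)*; Φ(A), 1]` is positive; take its Schur complement.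
    let C : Fin 2 → Matrix γ γ ℂ := ![A, 1]
    let D : Matrix γ (Fin 2 × γ) ℂ := Matrix.of fun c q => C q.1 c q.2
    have hblock : (fromBlocks (Φ (Aᴴ * A)) (Φ A)ᴴ (Φ A)ᴴᴴ 1).PosSemidef := by
      have h := (hΦ.posSemidef_idTensor (posSemidef_conjTranspose_mul_self D)).submatrix
        (Sum.elim (Prod.mk 0) (Prod.mk 1) : α ⊕ α → Fin 2 × α)
      have hD (a b : Fin 2) (i j : α) : idTensor Φ (Dᴴ * D) (a, i) (b, j) =
        Φ ((C a)ᴴ * C b) i j := rfl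
      convert h using 1
      ext (i | i) (j | j) <;> simp [hD, C, hΦ.map_conjTranspose, hone]
    let : Invertible (1 : Matrix α α ℂ) := invertibleOne
    simpa using (PosDef.fromBlocks₂₂ _ _ PosDef.one).mp hblock

theorem IsQuantumChannel.isSchwarzMap_heisenbergDual [DecidableEq α]
    {Λ : Matrix α α ℂ →ₗ[ℂ] Matrix γ γ ℂ} (hΛ : IsQuantumChannel Λ) :
    IsSchwarzMap (heisenbergDual Λ) := by
  classical
  exact hΛ.1.heisenbergDual.isSchwarzMap (heisenbergDual_one hΛ.2)

end SchwarzMaps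

section MultiplicativeDomain

variable {α γ : Type*} [Fintype α] [Fintype γ] {Φ : Matrix γ γ ℂ →ₗ[ℂ] Matrix α α ℂ}
  {σ : Matrix α α ℂ}

/-- The sesquilinear form `⟪A, B⟫ = tr σ (Φ(A* B) - Φ(A)* Φ(B))` measuring, in the state `σ`,
how far the Schwarz map `Φ` is from being multiplicative. -/
@[reducible]
def IsSchwarzMap.defectForm (hΦ : IsSchwarzMap Φ) (hσ : σ.PosSemidef) :
    PreInnerProductSpace.Core ℂ (Matrix γ γ ℂ) where
  inner A B := (σ * (Φ (Aᴴ * B) - (Φ A)ᴴ * Φ B)).trace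
  conj_inner_symm A B := by
    rw [starRingEnd_apply, ← trace_conjTranspose, trace_mul_comm]
    simp [← hΦ.map_conjTranspose, hσ.1.eq]
  re_inner_nonneg A := (Complex.nonneg_iff.mp (trace_mul_nonneg hσ (hΦ.posSemidef_sub A))).1
  add_left A B C := by
    simp only [conjTranspose_add, Matrix.add_mul, map_add, Matrix.mul_sub, Matrix.mul_add,
      trace_sub, trace_add]
    ring
  smul_left A B c := by simp [conjTranspose_smul, mul_sub]

theorem IsSchwarzMap.trace_mul_map_mul_of_left (hΦ : IsSchwarzMap Φ) (hσ : σ.PosSemidef)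
    {A : Matrix γ γ ℂ} (hA : (σ * Φ (Aᴴ * A)).trace = (σ * ((Φ A)ᴴ * Φ A)).trace)
    (B : Matrix γ γ ℂ) : (σ * Φ (Aᴴ * B)).trace = (σ * ((Φ A)ᴴ * Φ B)).trace := by
  have hAA : (hΦ.defectForm hσ).inner A A = 0 := by
    change (σ * (Φ (Aᴴ * A) - (Φ A)ᴴ * Φ A)).trace = 0
    rw [Matrix.mul_sub, trace_sub, hA, sub_self]
  have hAB : (hΦ.defectForm hσ).inner A B = 0 := by
    let := hΦ.defectForm hσ
    have h := InnerProductSpace.Core.inner_mul_inner_self_le (𝕜 := ℂ) A B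
    rw [InnerProductSpace.Core.norm_inner_symm B A, hAA, map_zero, zero_mul] at h
    exact norm_eq_zero.mp (mul_self_eq_zero.mp (h.antisymm (mul_self_nonneg _)))
  change (σ * (Φ (Aᴴ * B) - (Φ A)ᴴ * Φ B)).trace = 0 at hAB
  rwa [Matrix.mul_sub, trace_sub, sub_eq_zero] at hAB

theorem IsSchwarzMap.trace_mul_map_mul_of_right (hΦ : IsSchwarzMap Φ) (hσ : σ.PosSemidef)
    {A : Matrix γ γ ℂ} (hA : (σ * Φ (Aᴴ * A)).trace = (σ * ((Φ A)ᴴ * Φ A)).trace)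
    (B : Matrix γ γ ℂ) : (σ * Φ (B * A)).trace = (σ * (Φ B * Φ A)).trace := by
  have h := congrArg star (hΦ.trace_mul_map_mul_of_left hσ hA Bᴴ)
  rw [← trace_conjTranspose, ← trace_conjTranspose] at h
  simpa [← hΦ.map_conjTranspose, hσ.1.eq, trace_mul_comm σ, Matrix.mul_assoc] using h

end MultiplicativeDomain

section InvariantStates

variable {α : Type*} [Fintype α] {E : Matrix α α ℂ →ₗ[ℂ] Matrix α α ℂ} {σ τ : Matrix α α ℂ}

theorem IsSchwarzMap.trace_mul_map_fixed_mul (hE : IsSchwarzMap E) (hσ : σ.PosSemidef)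
    (hEσ : ∀ X, (σ * E X).trace = (σ * X).trace) {A : Matrix α α ℂ} (hA : E A = A)
    (B : Matrix α α ℂ) : (σ * (A * E B)).trace = (σ * (A * B)).trace := by
  have hA' : E Aᴴ = Aᴴ := by rw [hE.map_conjTranspose, hA]
  have h := hE.trace_mul_map_mul_of_left hσ (A := Aᴴ) (by simp [hEσ, hA']) B
  rwa [hEσ, conjTranspose_conjTranspose, hA', conjTranspose_conjTranspose, eq_comm] at h

theorem IsSchwarzMap.trace_mul_map_mul_fixed (hE : IsSchwarzMap E) (hσ : σ.PosSemidef)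
    (hEσ : ∀ X, (σ * E X).trace = (σ * X).trace) {A : Matrix α α ℂ} (hA : E A = A)
    (B : Matrix α α ℂ) : (σ * (E B * A)).trace = (σ * (B * A)).trace := by
  have h := hE.trace_mul_map_mul_of_right hσ (A := A) (by simp [hEσ, hA]) B
  rwa [hEσ, hA, eq_comm] at h

theorem IsSchwarzMap.map_mul_eq_of_isIdempotentElem (hE : IsSchwarzMap E)
    (hidem : IsIdempotentElem E) (hσ : σ.PosSemidef)
    (hEσ : ∀ X, (σ * E X).trace = (σ * X).trace) {Z : Matrix α α ℂ}
    (hEZσ : ∀ X, (Z * σ * E X).trace = (Z * σ * X).trace) : E Z * σ = Z * σ := by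
  have hfix (X) : E (E X) = E X := LinearMap.congr_fun hidem X
  refine Matrix.ext_iff_trace_mul_left.mpr fun X => ?_
  calc (X * (E Z * σ)).trace = (σ * (X * E Z)).trace := by
        rw [← Matrix.mul_assoc, trace_mul_comm]
    _ = (σ * (E X * E Z)).trace := (hE.trace_mul_map_mul_fixed hσ hEσ (hfix Z) X).symm
    _ = (σ * (E X * Z)).trace := hE.trace_mul_map_fixed_mul hσ hEσ (hfix X) Z
    _ = (Z * σ * E X).trace := by rw [← Matrix.mul_assoc, ← trace_mul_comm, Matrix.mul_assoc]
    _ = (X * (Z * σ)).trace := by rw [hEZσ, trace_mul_comm]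

theorem IsSchwarzMap.conjTranspose_map_mul_eq_of_isIdempotentElem (hE : IsSchwarzMap E)
    (hidem : IsIdempotentElem E) (hσ : σ.PosSemidef)
    (hEσ : ∀ X, (σ * E X).trace = (σ * X).trace) {Z W : Matrix α α ℂ} (hZ : Z = W * σ)
    (hEZ : E Z * σ = Z * σ) : (E Z)ᴴ * σ = Zᴴ * σ := by
  have hfix (X) : E (E X) = E X := LinearMap.congr_fun hidem X
  set A := E Z - Z with hA
  have hAZ : A * Zᴴ = 0 := by
    have hAσ : A * σ = 0 := by rw [Matrix.sub_mul, hEZ, sub_self]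
    rw [hZ, conjTranspose_mul, hσ.1.eq, ← Matrix.mul_assoc, hAσ, Matrix.zero_mul]
  have hEA : E A = 0 := by rw [hA, map_sub, hfix, sub_self]
  have htr : (σ * (Aᴴᴴ * Aᴴ)).trace = 0 := by
    calc (σ * (Aᴴᴴ * Aᴴ)).trace = (σ * (A * E Zᴴ)).trace := by
          rw [conjTranspose_conjTranspose, hE.map_conjTranspose, hA, conjTranspose_sub,
            Matrix.mul_sub, ← hA, hAZ, sub_zero]
      _ = (σ * (E A * E Zᴴ)).trace := (hE.trace_mul_map_mul_fixed hσ hEσ (hfix _) A).symm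
      _ = 0 := by simp [hEA]
  have h := mul_eq_zero_of_trace_mul_conjTranspose_mul_self hσ htr
  rwa [hA, conjTranspose_sub, Matrix.sub_mul, sub_eq_zero] at h

end InvariantStates

section Commutation

theorem exists_mul_eq_of_mulVec_eq_zero {K m n l : Type*} [Field K] [Fintype m] [Fintype n]
    {A : Matrix m n K} {B : Matrix l n K} (h : ∀ v, A *ᵥ v = 0 → B *ᵥ v = 0) :
    ∃ W : Matrix l m K, W * A = B := by
  classical
  let f := A.mulVecLin
  let g := (LinearMap.ker f).liftQ B.mulVecLin h ∘ₗ f.quotKerEquivRange.symm.toLinearMap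
  obtain ⟨W, hW⟩ := g.exists_extend
  refine ⟨LinearMap.toMatrix' W, Matrix.toLin'.injective <| LinearMap.ext fun v => ?_⟩
  have hv := LinearMap.congr_fun hW ⟨f v, v, rfl⟩
  have hg : g ⟨f v, v, rfl⟩ = B *ᵥ v := by
    exact congrArg _ (f.quotKerEquivRange_symm_apply_image v _)
  rw [hg] at hv
  simpa [f] using hv

variable {α : Type*} [Fintype α]

theorem mulVec_eq_zero_of_add_mulVec_eq_zero {σ τ : Matrix α α ℂ} (hσ : σ.PosSemidef)
    (hτ : τ.PosSemidef) {v : α → ℂ} (hv : (σ + τ) *ᵥ v = 0) : τ *ᵥ v = 0 := by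
  rw [← hτ.dotProduct_mulVec_zero_iff]
  refine (((hτ.dotProduct_mulVec_nonneg v).antisymm ?_)).symm
  calc star v ⬝ᵥ τ *ᵥ v ≤ star v ⬝ᵥ σ *ᵥ v + star v ⬝ᵥ τ *ᵥ v :=
        le_add_of_nonneg_left (hσ.dotProduct_mulVec_nonneg v)
    _ = 0 := by rw [← dotProduct_add, ← Matrix.add_mulVec, hv, dotProduct_zero]

theorem commute_mul_of_trace_eq {σ Z : Matrix α α ℂ} (hσ : σ.PosSemidef)
    (hZσ : (Z * σ).IsHermitian)
    (htr : (σ * (Z * Zᴴ)).trace = (σ * (Zᴴ * Z)).trace) : Commute (Z * σ) σ := by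
  have hadj : σ * Zᴴ = Z * σ := by simpa [hσ.1.eq] using hZσ.eq
  have hdiff : (Z - Zᴴ)ᴴ * σ = 0 := by
    refine mul_eq_zero_of_trace_mul_conjTranspose_mul_self hσ ?_
    have h₁ : (σ * (Zᴴ * Z)).trace = (σ * (Z * Z)).trace := by
      rw [← Matrix.mul_assoc, hadj, trace_mul_comm, trace_mul_comm σ, Matrix.mul_assoc]
    have h₂ : (σ * (Zᴴ * Zᴴ)).trace = (σ * (Zᴴ * Z)).trace := by
      rw [← Matrix.mul_assoc, hadj, Matrix.mul_assoc, hadj, trace_mul_comm, ← hadj,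
        Matrix.mul_assoc]
    simp only [conjTranspose_sub, conjTranspose_conjTranspose, Matrix.sub_mul, Matrix.mul_sub,
      trace_sub, htr, h₂, ← h₁]
    ring
  have hσZ : σ * Z = Z * σ := by
    rw [conjTranspose_sub, conjTranspose_conjTranspose, Matrix.sub_mul, sub_eq_zero] at hdiff
    simpa [hσ.1.eq, hadj] using congrArg conjTranspose hdiff
  rw [Commute, SemiconjBy, Matrix.mul_assoc, ← Matrix.mul_assoc, ← Matrix.mul_assoc, hσZ]

end Commutation

section CompatibleChannels

variable {α α' γ γ' : Type*} [Fintype α]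

/-- Two channels are compatible if a single broadcasting channel has them as its marginals. -/
def IsCompatiblePair [Fintype γ] [Fintype γ'] (P : Matrix α α ℂ →ₗ[ℂ] Matrix γ γ ℂ)
    (Q : Matrix α α ℂ →ₗ[ℂ] Matrix γ' γ' ℂ) : Prop :=
  ∃ Λ : Matrix α α ℂ →ₗ[ℂ] Matrix (γ × γ') (γ × γ') ℂ,
    IsQuantumChannel Λ ∧ partialTraceRight ∘ₗ Λ = P ∧ partialTraceLeft ∘ₗ Λ = Q

theorem IsCompatiblePair.isQuantumChannel_left [Fintype γ] [Fintype γ']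
    {P : Matrix α α ℂ →ₗ[ℂ] Matrix γ γ ℂ} {Q : Matrix α α ℂ →ₗ[ℂ] Matrix γ' γ' ℂ}
    (h : IsCompatiblePair P Q) : IsQuantumChannel P := by
  obtain ⟨Λ, hΛ, rfl, -⟩ := h
  exact isQuantumChannel_partialTraceRight.comp hΛ

theorem IsCompatiblePair.isQuantumChannel_right [Fintype γ] [Fintype γ']
    {P : Matrix α α ℂ →ₗ[ℂ] Matrix γ γ ℂ} {Q : Matrix α α ℂ →ₗ[ℂ] Matrix γ' γ' ℂ}
    (h : IsCompatiblePair P Q) : IsQuantumChannel Q := by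
  obtain ⟨Λ, hΛ, -, rfl⟩ := h
  exact isQuantumChannel_partialTraceLeft.comp hΛ

variable {P Q : Matrix α α ℂ →ₗ[ℂ] Matrix α α ℂ} {σ τ : Matrix α α ℂ}

theorem IsCompatiblePair.trace_mul_mul_comm [DecidableEq α] (h : IsCompatiblePair P Q)
    (hσ : σ.PosSemidef) (hPσ : P σ = σ) {A B : Matrix α α ℂ} (hA : heisenbergDual P A = A)
    (hB : heisenbergDual Q B = B) : (σ * (A * B)).trace = (σ * (B * A)).trace := by
  have hE := h.isQuantumChannel_left.isSchwarzMap_heisenbergDual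
  obtain ⟨Λ, hΛ, rfl, rfl⟩ := h
  have hΦ := hΛ.isSchwarzMap_heisenbergDual
  have hA' : heisenbergDual (partialTraceRight ∘ₗ Λ) Aᴴ = Aᴴ := by rw [hE.map_conjTranspose, hA]
  -- `A ⊗ 1` is in the multiplicative domain relative to `σ`, so that the dual of `Λ` sends
  -- `A ⊗ B` both to `A * B` and to `B * A` under the trace against `σ`.
  have hmult {C} (hC : heisenbergDual (partialTraceRight ∘ₗ Λ) C = C) :
      (σ * heisenbergDual Λ ((C ⊗ₖ (1 : Matrix α α ℂ))ᴴ * C ⊗ₖ (1 : Matrix α α ℂ))).trace =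
      (σ * ((heisenbergDual Λ (C ⊗ₖ 1))ᴴ * heisenbergDual Λ (C ⊗ₖ 1))).trace := by
    rw [conjTranspose_kronecker, ← mul_kronecker_mul, conjTranspose_one, Matrix.one_mul,
      ← heisenbergDual_partialTraceRight_comp, ← heisenbergDual_partialTraceRight_comp,
      trace_mul_heisenbergDual_of_fixed hPσ, hC]
  have hleft := hΦ.trace_mul_map_mul_of_left hσ (hmult hA') (1 ⊗ₖ B)
  have hright := hΦ.trace_mul_map_mul_of_right hσ (hmult hA) (1 ⊗ₖ B)
  rw [← hΦ.map_conjTranspose] at hleft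
  simp only [conjTranspose_kronecker, conjTranspose_conjTranspose, conjTranspose_one,
    ← mul_kronecker_mul, Matrix.one_mul, Matrix.mul_one, ← heisenbergDual_partialTraceRight_comp,
    ← heisenbergDual_partialTraceLeft_comp, hA, hB] at hleft hright
  exact hleft.symm.trans hright

theorem IsCompatiblePair.commute_mul (h : IsCompatiblePair P Q) (hP : IsIdempotentElem P)
    (hQ : IsIdempotentElem Q) (hσ : σ.PosSemidef) (hPσ : P σ = σ) (hQσ : Q σ = σ)
    {Z W : Matrix α α ℂ} (hZ : Z = W * σ) (hherm : (Z * σ).IsHermitian)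
    (hPZσ : P (Z * σ) = Z * σ) (hQZσ : Q (Z * σ) = Z * σ) : Commute (Z * σ) σ := by
  classical
  have hE₁ := h.isQuantumChannel_left.isSchwarzMap_heisenbergDual
  have hE₂ := h.isQuantumChannel_right.isSchwarzMap_heisenbergDual
  have hinv₁ := trace_mul_heisenbergDual_of_fixed hPσ
  have hinv₂ := trace_mul_heisenbergDual_of_fixed hQσ
  have hidem₁ := isIdempotentElem_heisenbergDual hP
  have hidem₂ := isIdempotentElem_heisenbergDual hQ
  set Z₁ := heisenbergDual P Z
  set Z₂ := heisenbergDual Q Z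
  have hZ₁σ : Z₁ * σ = Z * σ := hE₁.map_mul_eq_of_isIdempotentElem hidem₁ hσ hinv₁
    (trace_mul_heisenbergDual_of_fixed hPZσ)
  have hZ₂σ : Z₂ * σ = Z * σ := hE₂.map_mul_eq_of_isIdempotentElem hidem₂ hσ hinv₂
    (trace_mul_heisenbergDual_of_fixed hQZσ)
  have hσZ₁ : σ * Z₁ = σ * Z := by
    simpa [hσ.1.eq] using congrArg conjTranspose
      (hE₁.conjTranspose_map_mul_eq_of_isIdempotentElem hidem₁ hσ hinv₁ hZ hZ₁σ)
  have hZ₂'σ : Z₂ᴴ * σ = Zᴴ * σ :=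
    hE₂.conjTranspose_map_mul_eq_of_isIdempotentElem hidem₂ hσ hinv₂ hZ hZ₂σ
  have hσZ₂' : σ * Z₂ᴴ = σ * Zᴴ := by simpa [hσ.1.eq] using congrArg conjTranspose hZ₂σ
  refine commute_mul_of_trace_eq hσ hherm ?_
  calc (σ * (Z * Zᴴ)).trace = (Z₁ * (Zᴴ * σ)).trace := by
        rw [← Matrix.mul_assoc, ← hσZ₁, Matrix.mul_assoc, trace_mul_comm, Matrix.mul_assoc]
    _ = (σ * (Z₁ * Z₂ᴴ)).trace := by
      rw [← hZ₂'σ, ← Matrix.mul_assoc, trace_mul_comm]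
    _ = (σ * (Z₂ᴴ * Z₁)).trace := h.trace_mul_mul_comm hσ hPσ (LinearMap.congr_fun hidem₁ Z)
      (by rw [hE₂.map_conjTranspose]; exact congrArg _ (LinearMap.congr_fun hidem₂ Z))
    _ = (Zᴴ * (Z₁ * σ)).trace := by
      rw [← Matrix.mul_assoc, hσZ₂', Matrix.mul_assoc, trace_mul_comm, Matrix.mul_assoc]
    _ = (σ * (Zᴴ * Z)).trace := by rw [hZ₁σ, ← Matrix.mul_assoc, trace_mul_comm]

theorem IsCompatiblePair.commute (h : IsCompatiblePair P Q) (hP : IsIdempotentElem P)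
    (hQ : IsIdempotentElem Q) (hσ : σ.PosSemidef) (hτ : τ.PosSemidef) (hPσ : P σ = σ)
    (hQσ : Q σ = σ) (hPτ : P τ = τ) (hQτ : Q τ = τ) : Commute σ τ := by
  have hsum := hσ.add hτ
  -- `τ = Z * (σ + τ)` with `Z = W * (σ + τ)`, even where `σ + τ` is singular.
  obtain ⟨W, hW⟩ : ∃ W : Matrix α α ℂ, W * ((σ + τ) * (σ + τ)) = τ := by
    refine exists_mul_eq_of_mulVec_eq_zero fun v hv => ?_
    nth_rw 1 [← hsum.1.eq] at hv
    exact mulVec_eq_zero_of_add_mulVec_eq_zero hσ hτ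
      ((conjTranspose_mul_self_mulVec_eq_zero _ _).mp hv)
  have hcomm : Commute τ (σ + τ) := by
    rw [← Matrix.mul_assoc] at hW
    have := h.commute_mul hP hQ hsum (by rw [map_add, hPσ, hPτ]) (by rw [map_add, hQσ, hQτ])
      (Z := W * (σ + τ)) rfl (by rw [hW]; exact hτ.1) (by rw [hW, hPτ]) (by rw [hW, hQτ])
    rwa [hW] at this
  simpa using (hcomm.sub_right (Commute.refl τ)).symm

end CompatibleChannels

section Slices

variable {α β : Type*} [Fintype β] {ρ : Matrix (α × β) (α × β) ℂ}

/-- The unnormalised state `tr_B (ρ * (1 ⊗ Y))` left on `A` when the effect `Y` is observed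
on `B`. -/
def conditionalState [Fintype α] [DecidableEq α] (ρ : Matrix (α × β) (α × β) ℂ)
    (Y : Matrix β β ℂ) : Matrix α α ℂ :=
  partialTraceRight (ρ * (1 ⊗ₖ Y))

variable [Fintype α] [DecidableEq α]

theorem trace_conditionalState_mul (ρ : Matrix (α × β) (α × β) ℂ) (X : Matrix α α ℂ)
    (Y : Matrix β β ℂ) : (conditionalState ρ Y * X).trace = (ρ * (X ⊗ₖ Y)).trace := by
  classical
  rw [conditionalState, trace_partialTraceRight_mul, Matrix.mul_assoc, ← mul_kronecker_mul,
    Matrix.one_mul, Matrix.mul_one]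

theorem posSemidef_conditionalState (hρ : ρ.PosSemidef) {Y : Matrix β β ℂ} (hY : Y.PosSemidef) :
    (conditionalState ρ Y).PosSemidef := by
  refine posSemidef_of_forall_trace_mul_nonneg fun X hX => ?_
  rw [trace_mul_comm, trace_conditionalState_mul]
  exact trace_mul_nonneg hρ (hX.kronecker hY)

theorem map_conditionalState (P : Matrix α α ℂ →ₗ[ℂ] Matrix α α ℂ) (hρ : tensorId P ρ = ρ)
    (Y : Matrix β β ℂ) : P (conditionalState ρ Y) = conditionalState ρ Y := by
  have h : P ∘ₗ partialTraceRight ∘ₗ LinearMap.mulRight ℂ (1 ⊗ₖ Y) =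
      partialTraceRight ∘ₗ LinearMap.mulRight ℂ (1 ⊗ₖ Y) ∘ₗ tensorId P :=
    linearMap_ext_kronecker fun A B => by simp [tensorId_kronecker, ← mul_kronecker_mul]
  simpa [conditionalState, hρ] using LinearMap.congr_fun h ρ

theorem span_posSemidef {κ : Type*} [Finite κ] :
    Submodule.span ℂ {Y : Matrix κ κ ℂ | Y.PosSemidef} = ⊤ := by
  classical
  cases nonempty_fintype κ
  open scoped MatrixOrder Matrix.Norms.L2Operator in
  simpa only [Matrix.nonneg_iff_posSemidef] using CStarAlgebra.span_nonneg (A := Matrix κ κ ℂ)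

theorem commute_kronecker_one_of_forall_conditionalState [DecidableEq β] {A : Matrix α α ℂ}
    (h : ∀ Y : Matrix β β ℂ, Y.PosSemidef → Commute (conditionalState ρ Y) A) :
    Commute ρ (A ⊗ₖ 1) := by
  refine Matrix.ext_iff_trace_mul_left.mpr fun N => ?_
  refine LinearMap.congr_fun (f := traceLinearMap _ ℂ ℂ ∘ₗ LinearMap.mulRight ℂ (ρ * A ⊗ₖ 1))
    (g := traceLinearMap _ ℂ ℂ ∘ₗ LinearMap.mulRight ℂ (A ⊗ₖ 1 * ρ))
    (linearMap_ext_kronecker fun X Y => ?_) N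
  refine LinearMap.congr_fun (LinearMap.ext_on (span_posSemidef (κ := β))
    (f := traceLinearMap _ ℂ ℂ ∘ₗ LinearMap.mulRight ℂ _ ∘ₗ kroneckerBilinear (R := ℂ) X)
    (g := traceLinearMap _ ℂ ℂ ∘ₗ LinearMap.mulRight ℂ _ ∘ₗ kroneckerBilinear (R := ℂ) X)
    fun Y (hY : Y.PosSemidef) => ?_) Y
  change (X ⊗ₖ Y * (ρ * A ⊗ₖ 1)).trace = (X ⊗ₖ Y * (A ⊗ₖ 1 * ρ)).trace
  calc (X ⊗ₖ Y * (ρ * A ⊗ₖ 1)).trace = (ρ * (A * X) ⊗ₖ Y).trace := by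
        rw [trace_mul_comm, Matrix.mul_assoc, ← mul_kronecker_mul, Matrix.one_mul]
    _ = (conditionalState ρ Y * A * X).trace := by
        rw [Matrix.mul_assoc, trace_conditionalState_mul]
    _ = (conditionalState ρ Y * (X * A)).trace := by
        rw [(h Y hY).eq, Matrix.mul_assoc, trace_mul_comm, Matrix.mul_assoc]
    _ = (X ⊗ₖ Y * (A ⊗ₖ 1 * ρ)).trace := by
        rw [trace_conditionalState_mul, ← Matrix.mul_assoc, ← mul_kronecker_mul, Matrix.mul_one,
          trace_mul_comm]

end Slices

section OrthonormalFrames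

/-- The operator `|v⟩⟨v|`. -/
def rankOne {α : Type*} (v : α → ℂ) : Matrix α α ℂ :=
  vecMulVec v (star v)

variable {α β : Type*}

theorem rankOne_kronecker_rankOne (v : α → ℂ) (w : β → ℂ) :
    rankOne v ⊗ₖ rankOne w = rankOne fun x => v x.1 * w x.2 := by
  ext x y
  simp [rankOne, vecMulVec_apply, mul_mul_mul_comm]

theorem posSemidef_rankOne [Finite α] (v : α → ℂ) : (rankOne v).PosSemidef :=
  posSemidef_vecMulVec_self_star v

variable [Fintype α]

theorem rankOne_mul_mul_rankOne (v : α → ℂ) (M : Matrix α α ℂ) :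
    rankOne v * M * rankOne v = (M * rankOne v).trace • rankOne v := by
  rw [rankOne, Matrix.mul_assoc, mul_vecMulVec, trace_vecMulVec, vecMulVec_mul_vecMulVec,
    vecMulVec_smul, dotProduct_comm]

theorem commute_rankOne {M : Matrix α α ℂ} (hM : M.IsHermitian) {v : α → ℂ} {c : ℂ}
    (hv : M *ᵥ v = c • v) : Commute M (rankOne v) := by
  rcases eq_or_ne v 0 with rfl | hv0
  · simp [rankOne]
  have hv' : star v ᵥ* M = star c • star v := by rw [← hM.eq, ← star_mulVec, hv, star_smul]
  have hc : star c = c := by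
    have h : star c * (star v ⬝ᵥ v) = c * (star v ⬝ᵥ v) := by
      rw [← smul_eq_mul, ← smul_dotProduct, ← hv', ← dotProduct_mulVec, hv, dotProduct_smul,
        smul_eq_mul]
    exact mul_right_cancel₀ (mt dotProduct_star_self_eq_zero.mp hv0) h
  rw [Commute, SemiconjBy, rankOne, mul_vecMulVec, vecMulVec_mul, hv, hv', hc, smul_vecMulVec,
    vecMulVec_smul]

variable [DecidableEq α]

/-- Orthonormality of a family of vectors indexed like the coordinates, hence a basis of `ℂ^α`. -/
def IsOrthonormalFrame (v : α → α → ℂ) : Prop :=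
  ∀ i i', star (v i) ⬝ᵥ v i' = if i = i' then 1 else 0

theorem IsOrthonormalFrame.completeOrthogonalIdempotents {v : α → α → ℂ}
    (hv : IsOrthonormalFrame v) : CompleteOrthogonalIdempotents fun i => rankOne (v i) where
  idem i := by simp [IsIdempotentElem, rankOne, vecMulVec_mul_vecMulVec, hv i i]
  ortho i j hij := by simp [rankOne, vecMulVec_mul_vecMulVec, hv i j, hij]
  complete := by
    have h : (Matrix.of v)ᵀᴴ * (Matrix.of v)ᵀ = 1 := by
      ext i j
      exact (hv i j).trans (one_apply).symm
    rw [← mul_eq_one_comm.mp h]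
    ext a a'
    simp [rankOne, Matrix.sum_apply, Matrix.mul_apply, vecMulVec_apply]

theorem IsOrthonormalFrame.trace_rankOne {v : α → α → ℂ} (hv : IsOrthonormalFrame v) (i : α) :
    (rankOne (v i)).trace = 1 := by
  rw [rankOne, trace_vecMulVec, dotProduct_comm, hv, if_pos rfl]

theorem exists_orthonormalBasis_forall_eigenvector {𝕜 E κ : Type*} [RCLike 𝕜]
    [NormedAddCommGroup E] [InnerProductSpace 𝕜 E] [FiniteDimensional 𝕜 E]
    {T : κ → Module.End 𝕜 E} (hT : ∀ k, (T k).IsSymmetric)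
    (hcomm : Pairwise (Function.onFun Commute T)) :
    ∃ b : OrthonormalBasis (Fin (Module.finrank 𝕜 E)) 𝕜 E, ∀ i k, ∃ c : 𝕜, T k (b i) = c • b i := by
  classical
  let V (χ : κ → 𝕜) : Submodule 𝕜 E := ⨅ k, Module.End.eigenspace (T k) (χ k)
  have hV : DirectSum.IsInternal V :=
    LinearMap.IsSymmetric.directSum_isInternal_of_pairwise_commute hT hcomm
  have hV' := DirectSum.isInternal_ne_bot_iff.mpr hV
  have hortho := (LinearMap.IsSymmetric.orthogonalFamily_iInf_eigenspaces hT).comp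
    (Subtype.val_injective (p := fun χ => V χ ≠ ⊥))
  have : Finite {χ // V χ ≠ ⊥} :=
    WellFoundedGT.finite_ne_bot_of_iSupIndep hV.submodule_iSupIndep
  have := Fintype.ofFinite {χ // V χ ≠ ⊥}
  refine ⟨hV'.subordinateOrthonormalBasis rfl hortho, fun i k => ?_⟩
  have hi := hV'.subordinateOrthonormalBasis_subordinate rfl i hortho
  exact ⟨_, Module.End.mem_eigenspace_iff.mp ((Submodule.mem_iInf _).mp hi k)⟩

theorem exists_isOrthonormalFrame_forall_commute {κ : Type*} {T : κ → Matrix α α ℂ}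
    (hT : ∀ k, (T k).IsHermitian) (hcomm : ∀ k l, Commute (T k) (T l)) :
    ∃ v : α → α → ℂ, IsOrthonormalFrame v ∧ ∀ i k, Commute (T k) (rankOne (v i)) := by
  have hcomm' : Pairwise (Function.onFun Commute fun k => toEuclideanLin (T k)) := fun k l _ =>
    LinearMap.ext fun x => by
      simp [toLpLin_apply, mulVec_mulVec, (hcomm k l).eq]
  obtain ⟨b, hb⟩ := exists_orthonormalBasis_forall_eigenvector
    (fun k => isSymmetric_toEuclideanLin_iff.mpr (hT k)) hcomm'
  let e := Fintype.equivOfCardEq (α := α) (β := Fin (Module.finrank ℂ (EuclideanSpace ℂ α)))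
    (by simp)
  refine ⟨fun i => (b (e i)).ofLp, fun i i' => ?_, fun i k => ?_⟩
  · have h := orthonormal_iff_ite.mp (b.orthonormal.comp e e.injective) i i'
    rwa [EuclideanSpace.inner_eq_star_dotProduct, dotProduct_comm] at h
  · obtain ⟨c, hc⟩ := hb (e i) k
    exact commute_rankOne (hT k) (congrArg WithLp.ofLp hc)

end OrthonormalFrames

section ClassicalStates

variable {α β : Type*} [Fintype α] [DecidableEq α] [Fintype β] [DecidableEq β]
  {ρ : Matrix (α × β) (α × β) ℂ}

theorem IsCompatiblePair.exists_isOrthonormalFrame_commute {P Q : Matrix α α ℂ →ₗ[ℂ] Matrix α α ℂ}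
    (h : IsCompatiblePair P Q) (hP : IsIdempotentElem P) (hQ : IsIdempotentElem Q)
    (hρ : ρ.PosSemidef) (hPρ : tensorId P ρ = ρ) (hQρ : tensorId Q ρ = ρ) :
    ∃ v : α → α → ℂ, IsOrthonormalFrame v ∧ ∀ i, Commute ρ (rankOne (v i) ⊗ₖ 1) := by
  have hpos (Y : {Y : Matrix β β ℂ // Y.PosSemidef}) := posSemidef_conditionalState hρ Y.2
  obtain ⟨v, hv, hcomm⟩ := exists_isOrthonormalFrame_forall_commute (fun Y => (hpos Y).1)
    fun Y Y' => h.commute hP hQ (hpos Y) (hpos Y') (map_conditionalState P hPρ Y)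
      (map_conditionalState Q hQρ Y) (map_conditionalState P hPρ Y')
      (map_conditionalState Q hQρ Y')
  exact ⟨v, hv, fun i => commute_kronecker_one_of_forall_conditionalState fun Y hY =>
    hcomm i ⟨Y, hY⟩⟩

theorem IsCompatiblePair.exists_isOrthonormalFrame_commute_right
    {P Q : Matrix β β ℂ →ₗ[ℂ] Matrix β β ℂ} (h : IsCompatiblePair P Q) (hP : IsIdempotentElem P)
    (hQ : IsIdempotentElem Q) (hρ : ρ.PosSemidef) (hPρ : idTensor P ρ = ρ)
    (hQρ : idTensor Q ρ = ρ) :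
    ∃ w : β → β → ℂ, IsOrthonormalFrame w ∧ ∀ j, Commute ρ (1 ⊗ₖ rankOne (w j)) := by
  have hswap {R : Matrix β β ℂ →ₗ[ℂ] Matrix β β ℂ} (hR : idTensor R ρ = ρ) :
      tensorId R (ρ.submatrix Prod.swap Prod.swap) = ρ.submatrix Prod.swap Prod.swap :=
    congrArg (submatrix · Prod.swap Prod.swap) hR
  obtain ⟨w, hw, hcomm⟩ := h.exists_isOrthonormalFrame_commute hP hQ (hρ.submatrix Prod.swap)
    (hswap hPρ) (hswap hQρ)
  refine ⟨w, hw, fun j => ?_⟩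
  have hj := (hcomm j).map (reindexAlgEquiv ℂ ℂ (Equiv.prodComm β α))
  have hkron : (rankOne (w j) ⊗ₖ (1 : Matrix α α ℂ)).submatrix Prod.swap Prod.swap =
      1 ⊗ₖ rankOne (w j) := Matrix.ext fun _ _ => mul_comm _ _
  simpa [hkron] using hj

theorem sum_smul_kronecker_eq_of_commute {v : α → α → ℂ} {w : β → β → ℂ}
    (hv : IsOrthonormalFrame v) (hw : IsOrthonormalFrame w)
    (hcommv : ∀ i, Commute ρ (rankOne (v i) ⊗ₖ 1)) (hcommw : ∀ j, Commute ρ (1 ⊗ₖ rankOne (w j))) :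
    ∑ i, ∑ j, (ρ * (rankOne (v i) ⊗ₖ rankOne (w j))).trace • (rankOne (v i) ⊗ₖ rankOne (w j)) =
      ρ := by
  have hR (i j) : (ρ * (rankOne (v i) ⊗ₖ rankOne (w j))).trace • rankOne (v i) ⊗ₖ rankOne (w j) =
      ρ * rankOne (v i) ⊗ₖ rankOne (w j) := by
    have hcomm : Commute ρ (rankOne (v i) ⊗ₖ rankOne (w j)) := by
      simpa [← mul_kronecker_mul] using (hcommv i).mul_right (hcommw j)
    have hidem : (rankOne (v i) ⊗ₖ rankOne (w j)) * (rankOne (v i) ⊗ₖ rankOne (w j)) =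
        rankOne (v i) ⊗ₖ rankOne (w j) := by
      rw [← mul_kronecker_mul, hv.completeOrthogonalIdempotents.idem i,
        hw.completeOrthogonalIdempotents.idem j]
    calc _ = rankOne (v i) ⊗ₖ rankOne (w j) * ρ * rankOne (v i) ⊗ₖ rankOne (w j) := by
          rw [rankOne_kronecker_rankOne, rankOne_mul_mul_rankOne]
      _ = ρ * rankOne (v i) ⊗ₖ rankOne (w j) := by rw [← hcomm.eq, Matrix.mul_assoc, hidem]
  have hcomplete : ∑ i, ∑ j, rankOne (v i) ⊗ₖ rankOne (w j) = 1 := by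
    rw [← one_kronecker_one, ← hv.completeOrthogonalIdempotents.complete,
      ← hw.completeOrthogonalIdempotents.complete]
    ext p q
    simp only [Matrix.sum_apply, kroneckerMap_apply, Finset.sum_mul_sum]
  simp_rw [hR, ← Finset.mul_sum, hcomplete, Matrix.mul_one]

theorem IsDensityMatrix.classicalClassical (hρ : IsDensityMatrix ρ) {v : α → α → ℂ}
    {w : β → β → ℂ} (hv : IsOrthonormalFrame v) (hw : IsOrthonormalFrame w)
    (hcommv : ∀ i, Commute ρ (rankOne (v i) ⊗ₖ 1))
    (hcommw : ∀ j, Commute ρ (1 ⊗ₖ rankOne (w j))) : ClassicalClassical ρ := by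
  have hsum := sum_smul_kronecker_eq_of_commute hv hw hcommv hcommw
  have hnonneg (i j) : 0 ≤ (ρ * (rankOne (v i) ⊗ₖ rankOne (w j))).trace :=
    trace_mul_nonneg hρ.1 ((posSemidef_rankOne _).kronecker (posSemidef_rankOne _))
  have hreal (i j) := (Complex.eq_re_of_ofReal_le (r := 0) (by simpa using hnonneg i j)).symm
  refine ⟨fun i j => (ρ * (rankOne (v i) ⊗ₖ rankOne (w j))).trace.re, v, w,
    fun i j => (Complex.nonneg_iff.mp (hnonneg i j)).1, ?_, hv, hw, ?_⟩
  · have htr := congrArg trace hsum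
    simp only [trace_sum, trace_smul, trace_kronecker, hv.trace_rankOne, hw.trace_rankOne, mul_one,
      smul_eq_mul, hρ.2] at htr
    simpa [Complex.re_sum] using congrArg Complex.re htr
  · simp only [hreal]
    exact hsum.symm

end ClassicalStates

section Compactness

open scoped Matrix.Norms.L2Operator MatrixOrder

variable {α γ γ' κ : Type*}

theorem norm_le_re_trace_of_posSemidef [Fintype α] [DecidableEq α] {M : Matrix α α ℂ}
    (hM : M.PosSemidef) : ‖M‖ ≤ M.trace.re := by
  have htrace : M.trace.re = ∑ i, hM.1.eigenvalues i := by simp [hM.1.trace_eq_sum_eigenvalues]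
  have hnonneg := hM.eigenvalues_nonneg
  rw [htrace, CStarAlgebra.norm_le_iff_le_algebraMap M (Finset.sum_nonneg fun i _ => hnonneg i)
    hM.nonneg, le_algebraMap_iff_spectrum_le, hM.1.spectrum_real_eq_range_eigenvalues]
  rintro _ ⟨i, rfl⟩
  exact Finset.single_le_sum (fun j _ => hnonneg j) (Finset.mem_univ i)

theorem isClosed_setOf_posSemidef [Finite α] : IsClosed {M : Matrix α α ℂ | M.PosSemidef} := by
  classical
  cases nonempty_fintype α
  simpa only [Matrix.nonneg_iff_posSemidef] using CStarAlgebra.isClosed_nonneg (A := Matrix α α ℂ)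

theorem continuous_idTensor [Finite α] [Finite γ] {T : Type*} [TopologicalSpace T]
    {u : T → Matrix α α ℂ →L[ℂ] Matrix γ γ ℂ} {M : T → Matrix (κ × α) (κ × α) ℂ}
    (hu : Continuous u) (hM : Continuous M) :
    Continuous fun t => idTensor (u t).toLinearMap (M t) := by
  classical
  cases nonempty_fintype α
  cases nonempty_fintype γ
  exact continuous_matrix fun p q => (hu.clm_apply
    (continuous_matrix fun b b' => hM.matrix_elem (p.1, b) (q.1, b'))).matrix_elem p.2 q.2

theorem continuous_tensorId [Finite α] [Finite γ] {T : Type*} [TopologicalSpace T]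
    {u : T → Matrix α α ℂ →L[ℂ] Matrix γ γ ℂ} {M : T → Matrix (α × κ) (α × κ) ℂ}
    (hu : Continuous u) (hM : Continuous M) :
    Continuous fun t => tensorId (u t).toLinearMap (M t) := by
  classical
  cases nonempty_fintype α
  cases nonempty_fintype γ
  exact continuous_matrix fun p q => (hu.clm_apply
    (continuous_matrix fun a a' => hM.matrix_elem (a, p.2) (a', q.2))).matrix_elem p.1 q.1

variable [Fintype α] [Fintype γ] [Fintype γ']

theorem isCompact_setOf_isQuantumChannel :
    IsCompact {u : Matrix α α ℂ →L[ℂ] Matrix γ γ ℂ | IsQuantumChannel u.toLinearMap} := by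
  classical
  have := FiniteDimensional.proper ℂ (Matrix α α ℂ →L[ℂ] Matrix γ γ ℂ)
  refine Metric.isCompact_of_isClosed_isBounded ?_ ?_
  · simp only [IsQuantumChannel, IsCompletelyPositive, Set.ofPred_and, Set.ofPred_forall]
    refine (isClosed_iInter fun k => isClosed_iInter fun M => isClosed_iInter fun _ =>
      isClosed_setOf_posSemidef.preimage (continuous_idTensor continuous_id continuous_const)).inter
      (isClosed_iInter fun X => isClosed_eq (Continuous.matrix_trace ?_) continuous_const)
    exact continuous_id.clm_apply continuous_const
  · -- A channel is bounded on a basis of positive semidefinite matrices since it keeps their trace.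
    let b := Module.Basis.ofSpan (span_posSemidef (κ := α)).ge
    have hb (i) : (b i).PosSemidef :=
      Module.Basis.ofSpan_subset (span_posSemidef (κ := α)).ge (Set.mem_range_self i)
    have := Module.Finite.finite_basis b
    obtain ⟨C, -, hC⟩ := b.exists_opNorm_le (F := Matrix γ γ ℂ)
    obtain ⟨R, hR⟩ := (Set.finite_range fun i => (b i).trace.re).bddAbove
    refine isBounded_iff_forall_norm_le.mpr ⟨C * max R 0, fun u hu => ?_⟩
    refine hC (le_max_right _ _) fun i => ?_
    calc ‖u (b i)‖ ≤ (u (b i)).trace.re :=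
          norm_le_re_trace_of_posSemidef (hu.1.posSemidef_map (hb i))
      _ = (b i).trace.re := congrArg Complex.re (hu.2 (b i))
      _ ≤ max R 0 := (hR (Set.mem_range_self i)).trans (le_max_left _ _)

theorem isCompact_setOf_isCompatiblePair :
    IsCompact {u : (Matrix α α ℂ →L[ℂ] Matrix γ γ ℂ) × (Matrix α α ℂ →L[ℂ] Matrix γ' γ' ℂ) |
      IsCompatiblePair u.1.toLinearMap u.2.toLinearMap} := by
  classical
  have himage : {u : (Matrix α α ℂ →L[ℂ] Matrix γ γ ℂ) × (Matrix α α ℂ →L[ℂ] Matrix γ' γ' ℂ) |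
      IsCompatiblePair u.1.toLinearMap u.2.toLinearMap} =
      (fun w : Matrix α α ℂ →L[ℂ] Matrix (γ × γ') (γ × γ') ℂ =>
        (partialTraceRight.toContinuousLinearMap ∘L w,
          partialTraceLeft.toContinuousLinearMap ∘L w)) ''
      {w | IsQuantumChannel w.toLinearMap} := by
    ext ⟨u₁, u₂⟩
    constructor
    · rintro ⟨Λ, hΛ, h₁, h₂⟩
      exact ⟨Λ.toContinuousLinearMap, hΛ, Prod.ext (ContinuousLinearMap.coe_injective h₁)
        (ContinuousLinearMap.coe_injective h₂)⟩
    · rintro ⟨w, hw, h⟩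
      obtain ⟨rfl, rfl⟩ := Prod.mk.inj h
      exact ⟨w.toLinearMap, hw, rfl, rfl⟩
  rw [himage]
  exact isCompact_setOf_isQuantumChannel.image ((continuous_const.clm_comp continuous_id).prodMk
    (continuous_const.clm_comp continuous_id))

end Compactness

section IdempotentBroadcasts

variable {α β : Type*} {ρ : Matrix (α × β) (α × β) ℂ}

theorem tensorId_eq_of_tensorMap_eq [Finite α] [Finite β] {P : Module.End ℂ (Matrix α α ℂ)}
    {Q : Module.End ℂ (Matrix β β ℂ)} (hP : IsIdempotentElem P) (h : tensorMap P Q ρ = ρ) :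
    tensorId P ρ = ρ := by
  have hcomp : tensorId P ∘ₗ tensorMap P Q = tensorMap P Q := by
    rw [← tensorMap_id_right, ← tensorMap_comp, LinearMap.id_comp, ← Module.End.mul_eq_comp, hP.eq]
  simpa [h] using LinearMap.congr_fun hcomp ρ

theorem idTensor_eq_of_tensorMap_eq [Finite α] [Finite β] {P : Module.End ℂ (Matrix α α ℂ)}
    {Q : Module.End ℂ (Matrix β β ℂ)} (hQ : IsIdempotentElem Q) (h : tensorMap P Q ρ = ρ) :
    idTensor Q ρ = ρ := by
  have hcomp : idTensor Q ∘ₗ tensorMap P Q = tensorMap P Q := by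
    rw [← tensorMap_id_left, ← tensorMap_comp, LinearMap.id_comp, ← Module.End.mul_eq_comp, hQ.eq]
  simpa [h] using LinearMap.congr_fun hcomp ρ

variable [Fintype α] [Fintype β]
  {P P' : Module.End ℂ (Matrix α α ℂ) × Module.End ℂ (Matrix α α ℂ)}
  {Q Q' : Module.End ℂ (Matrix β β ℂ) × Module.End ℂ (Matrix β β ℂ)}

theorem IsCompatiblePair.mul (hP' : IsCompatiblePair P'.1 P'.2) (hP : IsCompatiblePair P.1 P.2) :
    IsCompatiblePair (P' * P).1 (P' * P).2 := by
  have h₁ := hP'.isQuantumChannel_left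
  have h₂ := hP'.isQuantumChannel_right
  obtain ⟨Λ, hΛ, hΛ₁, hΛ₂⟩ := hP
  refine ⟨tensorMap P'.1 P'.2 ∘ₗ Λ, (h₁.tensorMap h₂).comp hΛ, ?_, ?_⟩
  · rw [← LinearMap.comp_assoc, partialTraceRight_comp_tensorMap _ h₂.2, LinearMap.comp_assoc, hΛ₁]
    rfl
  · rw [← LinearMap.comp_assoc, partialTraceLeft_comp_tensorMap h₁.2, LinearMap.comp_assoc, hΛ₂]
    rfl

/-- The pairs `P` and `Q` list the two marginals of channels `A → A₁A₂` and `B → B₁B₂` which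
broadcast `ρ`, i.e. `P₁ ⊗ Q₁` and `P₂ ⊗ Q₂` both fix `ρ`. -/
structure IsLocalBroadcast (ρ : Matrix (α × β) (α × β) ℂ)
    (P : Module.End ℂ (Matrix α α ℂ) × Module.End ℂ (Matrix α α ℂ))
    (Q : Module.End ℂ (Matrix β β ℂ) × Module.End ℂ (Matrix β β ℂ)) : Prop where
  compatible_left : IsCompatiblePair P.1 P.2
  compatible_right : IsCompatiblePair Q.1 Q.2
  tensorMap_fst : tensorMap P.1 Q.1 ρ = ρ
  tensorMap_snd : tensorMap P.2 Q.2 ρ = ρ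

theorem IsLocalBroadcast.mul (h' : IsLocalBroadcast ρ P' Q') (h : IsLocalBroadcast ρ P Q) :
    IsLocalBroadcast ρ (P' * P) (Q' * Q) where
  compatible_left := h'.compatible_left.mul h.compatible_left
  compatible_right := h'.compatible_right.mul h.compatible_right
  tensorMap_fst := by
    have := LinearMap.congr_fun (tensorMap_comp P'.1 P.1 Q'.1 Q.1) ρ
    rwa [LinearMap.comp_apply, h.tensorMap_fst, h'.tensorMap_fst] at this
  tensorMap_snd := by
    have := LinearMap.congr_fun (tensorMap_comp P'.2 P.2 Q'.2 Q.2) ρ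
    rwa [LinearMap.comp_apply, h.tensorMap_snd, h'.tensorMap_snd] at this

section

open scoped Matrix.Norms.L2Operator

theorem isCompact_setOf_isLocalBroadcast (ρ : Matrix (α × β) (α × β) ℂ) :
    IsCompact {x : ((Matrix α α ℂ →L[ℂ] Matrix α α ℂ) × (Matrix α α ℂ →L[ℂ] Matrix α α ℂ)) ×
      ((Matrix β β ℂ →L[ℂ] Matrix β β ℂ) × (Matrix β β ℂ →L[ℂ] Matrix β β ℂ)) |
      IsLocalBroadcast ρ (x.1.1.toLinearMap, x.1.2.toLinearMap)
        (x.2.1.toLinearMap, x.2.2.toLinearMap)} := by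
  have hcompatible := (isCompact_setOf_isCompatiblePair (α := α) (γ := α) (γ' := α)).prod
    (isCompact_setOf_isCompatiblePair (α := β) (γ := β) (γ' := β))
  convert (hcompatible.inter_right (isClosed_eq (f := fun x =>
      tensorMap x.1.1.toLinearMap x.2.1.toLinearMap ρ) ?_ continuous_const)).inter_right
    (isClosed_eq (f := fun x => tensorMap x.1.2.toLinearMap x.2.2.toLinearMap ρ) ?_
      continuous_const) using 1
  · exact Set.ext fun x => ⟨fun h => ⟨⟨⟨h.1, h.2⟩, h.3⟩, h.4⟩, fun h =>
      ⟨h.1.1.1, h.1.1.2, h.1.2, h.2⟩⟩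
  all_goals
    exact continuous_idTensor (by fun_prop) (continuous_tensorId (by fun_prop) continuous_const)

theorem IsLocalBroadcast.exists_isIdempotentElem (h : IsLocalBroadcast ρ P Q) :
    ∃ P' Q', IsIdempotentElem P' ∧ IsIdempotentElem Q' ∧ IsLocalBroadcast ρ P' Q' := by
  classical
  obtain ⟨x, hx, hidem⟩ := exists_idempotent_in_compact_subsemigroup
    (fun r => continuous_mul_const r) _
    ⟨((LinearMap.toContinuousLinearMap P.1, LinearMap.toContinuousLinearMap P.2),
      (LinearMap.toContinuousLinearMap Q.1, LinearMap.toContinuousLinearMap Q.2)), h⟩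
    (isCompact_setOf_isLocalBroadcast ρ) fun x hx y hy => IsLocalBroadcast.mul hx hy
  obtain ⟨⟨hP₁, hP₂⟩, hQ₁, hQ₂⟩ :
      ((x.1.1 * x.1.1 = x.1.1 ∧ x.1.2 * x.1.2 = x.1.2) ∧
        x.2.1 * x.2.1 = x.2.1 ∧ x.2.2 * x.2.2 = x.2.2) := by
    exact (Prod.ext_iff.mp hidem).imp Prod.ext_iff.mp Prod.ext_iff.mp
  exact ⟨(x.1.1, x.1.2), (x.2.1, x.2.2),
    Prod.ext (congrArg ContinuousLinearMap.toLinearMap hP₁)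
      (congrArg ContinuousLinearMap.toLinearMap hP₂),
    Prod.ext (congrArg ContinuousLinearMap.toLinearMap hQ₁)
      (congrArg ContinuousLinearMap.toLinearMap hQ₂), hx⟩

end

end IdempotentBroadcasts

section MeasureAndPrepare

variable {α β γ γ' ι : Type*} [Fintype α] [Fintype ι]

/-- The measure-and-prepare map `X ↦ ∑ᵢ tr(X Nᵢ) Rᵢ`, which prepares `Rᵢ` on outcome `i` of the
measurement with effects `N`. -/
noncomputable def measurePrepare (N : ι → Matrix α α ℂ) (R : ι → Matrix γ γ ℂ) :
    Matrix α α ℂ →ₗ[ℂ] Matrix γ γ ℂ :=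
  ∑ i, (traceLinearMap α ℂ ℂ ∘ₗ LinearMap.mulRight ℂ (N i)).smulRight (R i)

theorem measurePrepare_apply (N : ι → Matrix α α ℂ) (R : ι → Matrix γ γ ℂ) (X : Matrix α α ℂ) :
    measurePrepare N R X = ∑ i, (X * N i).trace • R i := by
  simp [measurePrepare]

theorem isCompletelyPositive_measurePrepare [Finite γ] {N : ι → Matrix α α ℂ}
    {R : ι → Matrix γ γ ℂ} (hN : ∀ i, (N i).PosSemidef) (hR : ∀ i, (R i).PosSemidef) :
    IsCompletelyPositive (measurePrepare N R) := by
  classical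
  intro k M hM
  have h : idTensor (measurePrepare N R) M = ∑ i, conditionalState M (N i) ⊗ₖ R i := by
    have hmap : idTensor (measurePrepare N R) = ∑ i, (kroneckerBilinear (R := ℂ)).flip (R i) ∘ₗ
        partialTraceRight ∘ₗ LinearMap.mulRight ℂ ((1 : Matrix (Fin k) (Fin k) ℂ) ⊗ₖ N i) := by
      refine linearMap_ext_kronecker fun X Y => ?_
      rw [idTensor_kronecker, measurePrepare_apply]
      change kroneckerBilinear (R := ℂ) X _ = _
      simp [← mul_kronecker_mul]
    rw [hmap, LinearMap.sum_apply]
    rfl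
  exact h ▸ posSemidef_sum _ fun i _ => (posSemidef_conditionalState hM (hN i)).kronecker (hR i)

theorem isQuantumChannel_measurePrepare [DecidableEq α] [Fintype γ] {N : ι → Matrix α α ℂ}
    {R : ι → Matrix γ γ ℂ} (hN : ∀ i, (N i).PosSemidef) (hsum : ∑ i, N i = 1)
    (hR : ∀ i, IsDensityMatrix (R i)) : IsQuantumChannel (measurePrepare N R) := by
  refine ⟨isCompletelyPositive_measurePrepare hN fun i => (hR i).1, fun X => ?_⟩
  simp only [measurePrepare_apply, trace_sum, trace_smul, (hR _).2, smul_eq_mul, mul_one]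
  rw [← trace_sum, ← Finset.mul_sum, hsum, Matrix.mul_one]

theorem isCompatiblePair_measurePrepare [DecidableEq α] [Fintype γ] [Fintype γ']
    {N : ι → Matrix α α ℂ} {R : ι → Matrix γ γ ℂ} {R' : ι → Matrix γ' γ' ℂ}
    (hN : ∀ i, (N i).PosSemidef) (hsum : ∑ i, N i = 1) (hR : ∀ i, IsDensityMatrix (R i))
    (hR' : ∀ i, IsDensityMatrix (R' i)) :
    IsCompatiblePair (measurePrepare N R) (measurePrepare N R') := by
  refine ⟨measurePrepare N fun i => R i ⊗ₖ R' i, isQuantumChannel_measurePrepare hN hsum fun i =>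
    ⟨(hR i).1.kronecker (hR' i).1, ?_⟩, LinearMap.ext fun X => ?_, LinearMap.ext fun X => ?_⟩
  · rw [trace_kronecker, (hR i).2, (hR' i).2, mul_one]
  · simp [measurePrepare_apply, (hR' _).2]
  · simp [measurePrepare_apply, (hR _).2]

theorem measurePrepare_self_of_orthogonalIdempotents [DecidableEq α] {e : ι → Matrix α α ℂ}
    (he : OrthogonalIdempotents e) (htrace : ∀ i, (e i).trace = 1) (i : ι) :
    measurePrepare e e (e i) = e i := by
  classical
  simp [measurePrepare_apply, he.mul_eq, htrace, apply_ite trace]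

end MeasureAndPrepare

section LocalBroadcasting

variable {α β : Type*} [Fintype α] [DecidableEq α] [Fintype β] [DecidableEq β]
  {ρ : Matrix (α × β) (α × β) ℂ}

theorem IsLocalBroadcast.classicalClassical
    {P : Module.End ℂ (Matrix α α ℂ) × Module.End ℂ (Matrix α α ℂ)}
    {Q : Module.End ℂ (Matrix β β ℂ) × Module.End ℂ (Matrix β β ℂ)}
    (h : IsLocalBroadcast ρ P Q) (hρ : IsDensityMatrix ρ) : ClassicalClassical ρ := by
  obtain ⟨P', Q', hP', hQ', h'⟩ := h.exists_isIdempotentElem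
  have hP₁ : IsIdempotentElem P'.1 := congrArg Prod.fst hP'
  have hP₂ : IsIdempotentElem P'.2 := congrArg Prod.snd hP'
  have hQ₁ : IsIdempotentElem Q'.1 := congrArg Prod.fst hQ'
  have hQ₂ : IsIdempotentElem Q'.2 := congrArg Prod.snd hQ'
  obtain ⟨v, hv, hcommv⟩ := h'.compatible_left.exists_isOrthonormalFrame_commute hP₁ hP₂ hρ.1
    (tensorId_eq_of_tensorMap_eq hP₁ h'.tensorMap_fst)
    (tensorId_eq_of_tensorMap_eq hP₂ h'.tensorMap_snd)
  obtain ⟨w, hw, hcommw⟩ := h'.compatible_right.exists_isOrthonormalFrame_commute_right hQ₁ hQ₂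
    hρ.1 (idTensor_eq_of_tensorMap_eq hQ₁ h'.tensorMap_fst)
    (idTensor_eq_of_tensorMap_eq hQ₂ h'.tensorMap_snd)
  exact hρ.classicalClassical hv hw hcommv hcommw

theorem IsOrthonormalFrame.isCompatiblePair_measurePrepare_self {v : α → α → ℂ}
    (hv : IsOrthonormalFrame v) :
    IsCompatiblePair (measurePrepare (fun i => rankOne (v i)) fun i => rankOne (v i))
      (measurePrepare (fun i => rankOne (v i)) fun i => rankOne (v i)) :=
  have hdensity (i) : IsDensityMatrix (rankOne (v i)) :=
    ⟨posSemidef_rankOne _, hv.trace_rankOne i⟩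
  isCompatiblePair_measurePrepare (fun i => (hdensity i).1)
    hv.completeOrthogonalIdempotents.complete hdensity hdensity

theorem ClassicalClassical.exists_isLocalBroadcast (h : ClassicalClassical ρ) :
    ∃ P Q, IsLocalBroadcast ρ P Q := by
  obtain ⟨p, v, w, -, -, hv, hw, rfl⟩ := h
  have hv : IsOrthonormalFrame v := hv
  have hw : IsOrthonormalFrame w := hw
  let D := measurePrepare (fun i => rankOne (v i)) fun i => rankOne (v i)
  let E := measurePrepare (fun j => rankOne (w j)) fun j => rankOne (w j)
  have hD (i) : D (rankOne (v i)) = rankOne (v i) := measurePrepare_self_of_orthogonalIdempotents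
    hv.completeOrthogonalIdempotents.1 hv.trace_rankOne i
  have hE (j) : E (rankOne (w j)) = rankOne (w j) := measurePrepare_self_of_orthogonalIdempotents
    hw.completeOrthogonalIdempotents.1 hw.trace_rankOne j
  have hfix : tensorMap D E (∑ i, ∑ j, (p i j : ℂ) • (rankOne (v i) ⊗ₖ rankOne (w j))) =
      ∑ i, ∑ j, (p i j : ℂ) • (rankOne (v i) ⊗ₖ rankOne (w j)) := by
    simp only [map_sum, map_smul, tensorMap_kronecker, hD, hE]
  exact ⟨(D, D), (E, E), hv.isCompatiblePair_measurePrepare_self,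
    hw.isCompatiblePair_measurePrepare_self, hfix, hfix⟩

theorem exists_isLocalBroadcast_iff {α β : Type*} [Fintype α] [Fintype β]
    {ρ : Matrix (α × β) (α × β) ℂ} :
    (∃ P Q, IsLocalBroadcast ρ P Q) ↔
      ∃ (Λ : Matrix α α ℂ →ₗ[ℂ] Matrix (α × α) (α × α) ℂ)
        (Γ : Matrix β β ℂ →ₗ[ℂ] Matrix (β × β) (β × β) ℂ),
        IsQuantumChannel Λ ∧ IsQuantumChannel Γ ∧
        marg11 (idTensor Γ (tensorId Λ ρ)) = ρ ∧ marg22 (idTensor Γ (tensorId Λ ρ)) = ρ := by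
  simp only [← tensorMap_apply, marg11_tensorMap, marg22_tensorMap]
  constructor
  · rintro ⟨⟨_, _⟩, ⟨_, _⟩, ⟨Λ, hΛ, rfl, rfl⟩, ⟨Γ, hΓ, rfl, rfl⟩, h₁, h₂⟩
    exact ⟨Λ, Γ, hΛ, hΓ, h₁, h₂⟩
  · rintro ⟨Λ, Γ, hΛ, hΓ, h₁, h₂⟩
    exact ⟨(_, _), (_, _), ⟨Λ, hΛ, rfl, rfl⟩, ⟨Γ, hΓ, rfl, rfl⟩, h₁, h₂⟩

end LocalBroadcasting

/-- **No-local-broadcasting theorem.** A bipartite state `ρ_{AB}` can be locally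
broadcast (there are local channels `Λ : A → A₁A₂` and `Γ : B → B₁B₂` such that the
`A₁B₁` and `A₂B₂` marginals of `(Λ ⊗ Γ)[ρ_{AB}]` both equal `ρ_{AB}`) if and only if
`ρ_{AB}` is classical-classical. -/
theorem no_local_broadcasting {α β : Type*} [Fintype α] [DecidableEq α]
    [Fintype β] [DecidableEq β]
    (ρ : Matrix (α × β) (α × β) ℂ) (hρ : IsDensityMatrix ρ) :
    (∃ (Λ : Matrix α α ℂ →ₗ[ℂ] Matrix (α × α) (α × α) ℂ)
        (Γ : Matrix β β ℂ →ₗ[ℂ] Matrix (β × β) (β × β) ℂ),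
        IsQuantumChannel Λ ∧ IsQuantumChannel Γ ∧
        marg11 (idTensor Γ (tensorId Λ ρ)) = ρ ∧
        marg22 (idTensor Γ (tensorId Λ ρ)) = ρ) ↔
      ClassicalClassical ρ := by
  rw [← exists_isLocalBroadcast_iff]
  constructor
  · rintro ⟨P, Q, h⟩
    exact h.classicalClassical hρ
  · exact fun h => h.exists_isLocalBroadcast
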